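/- Let W, J1, J2, X1, X2, Y1, Y2, Z1, Z2 be random variables with values in finite sets on a common probability space. Suppose: (i) Y1 and Y2 are each deterministic functions of (X1, X2); (ii) Z1 is a deterministic function of X1 and also a deterministic function of (Y2, X2); (iii) Z2 is a deterministic function of X2 and also a deterministic function of (Y1, X1); (iv) the Markov chain X2 − J2 − (X1, J1) holds in the sense that H(X2 | (J1, J2, X1)) = H(X2 | J2); and (v) the Markov chain W − (J1, J2) − Y1 holds in the sense that I(W; Y1 | (J1, J2)) = 0. Then 2·I(W; Y1) − I(W; Y2) ≤ H(J2) + H(Y1) + H(X1 | Z1) + H(X2 | Z2). -/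

import Mathlib

/-!
The inequality is of Shannon type: it follows from monotonicity of entropy under (almost surely)
deterministic functions (`H_le_of_isDetFnOf`) and from the nonnegativity of conditional mutual
information (`H_submod`).

Write `J = (J1, J2)`. First, `I(W; Y1) - I(W; Y2) ≤ H(X1, X2) - H(Y2)` because `(Y1, Y2)` is a
function of `(X1, X2)`, and `H(X1, X2) ≤ H(Y2) + H(X2) + H(X1 | Z1)` because `Z1` is a function of
`(Y2, X2)`. Next, `I(W; Y1) ≤ H(Y1) - H(Y1 | J)` by the Markov chain `W - J - Y1`. Finally
`H(X2) ≤ H(J2) + H(X2 | J2)`, and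
`H(X2 | J2) = H(X2 | J, X1) ≤ H(Y1 | J, X1) + H(X2 | Z2) ≤ H(Y1 | J) + H(X2 | Z2)`,
by the Markov chain `X2 - J2 - (X1, J1)` and because `Z2` is a function of `(Y1, X1)`. Adding these
up, the terms `H(Y1 | J)` cancel.

Both entropy facts are proved by writing `H(f(T))` as an expectation over the law of `T` of
`-log` of the marginal mass at `f(T)` (`H_eq_sum_map`).
-/

/-!
Shannon entropy, conditional entropy, and mutual information for discrete random
variables defined on a common probability space modelled by a `PMF`.
The logarithm is the natural logarithm and `0 log 0 = 0` (via `Real.negMulLog`).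
-/

namespace DiamondWiretap

/-- Shannon entropy `H(X)` of a random variable `X` on the probability space `(Ω, p)`. -/
noncomputable def H {Ω S : Type*} (p : PMF Ω) (X : Ω → S) : ℝ :=
  ∑' s : S, Real.negMulLog ((p.map X) s).toReal

/-- Joint entropy `H(X, Y)`. -/
noncomputable def H2 {Ω S T : Type*} (p : PMF Ω) (X : Ω → S) (Y : Ω → T) : ℝ :=
  H p (fun ω => (X ω, Y ω))

/-- Conditional entropy `H(X | Y) = H(X, Y) - H(Y)`. -/
noncomputable def condEnt {Ω S T : Type*} (p : PMF Ω) (X : Ω → S) (Y : Ω → T) : ℝ :=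
  H2 p X Y - H p Y

/-- Mutual information `I(X; Y) = H(X) + H(Y) - H(X, Y)`. -/
noncomputable def mutInfo {Ω S T : Type*} (p : PMF Ω) (X : Ω → S) (Y : Ω → T) : ℝ :=
  H p X + H p Y - H2 p X Y

/-- Conditional mutual information `I(X; Y | Z) = H(X,Z) + H(Y,Z) - H(X,Y,Z) - H(Z)`. -/
noncomputable def condMutInfo {Ω S T U : Type*} (p : PMF Ω)
    (X : Ω → S) (Y : Ω → T) (Z : Ω → U) : ℝ :=
  H2 p X Z + H2 p Y Z - H p (fun ω => (X ω, Y ω, Z ω)) - H p Z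

/-- `Z` is almost surely a deterministic function of `X`,
i.e. `Z = φ ∘ X` on the support of `p` for some function `φ`. -/
def IsDetFnOf {Ω S T : Type*} (p : PMF Ω) (Z : Ω → T) (X : Ω → S) : Prop :=
  ∃ φ : S → T, ∀ ω ∈ p.support, Z ω = φ (X ω)

end DiamondWiretap

open DiamondWiretap

namespace DiamondWiretap

/-- Change of variables: the expectation of `g` under the law of `f` is that of `g ∘ f`. -/
lemma sum_map_mul {S T : Type*} [Fintype S] [Fintype T] (q : PMF T) (f : T → S) (g : S → ℝ) :
    ∑ s, ((q.map f) s).toReal * g s = ∑ t, (q t).toReal * g (f t) := by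
  classical
  have h : ∀ s, ((q.map f) s).toReal = ∑ t, if s = f t then (q t).toReal else 0 := by
    intro s
    rw [PMF.map_apply, tsum_fintype, ENNReal.toReal_sum]
    · refine Finset.sum_congr rfl fun t _ => ?_
      split_ifs <;> simp
    · intro t _
      split_ifs
      · exact q.apply_ne_top t
      · simp
  simp_rw [h, Finset.sum_mul]
  rw [Finset.sum_comm]
  refine Finset.sum_congr rfl fun t _ => ?_
  simp [ite_mul]

lemma sum_toReal {T : Type*} [Fintype T] (q : PMF T) : ∑ t, (q t).toReal = 1 := by
  have h := q.tsum_coe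
  rw [tsum_fintype] at h
  rw [← ENNReal.toReal_sum fun t _ => q.apply_ne_top t, h, ENNReal.toReal_one]

/-- A point of a PMF has at most the mass of the fibre it lies in. -/
lemma le_map_apply {S T : Type*} (q : PMF T) (f : T → S) (t : T) :
    (q t).toReal ≤ ((q.map f) (f t)).toReal := by
  classical
  refine ENNReal.toReal_mono (PMF.apply_ne_top _ _) ?_
  rw [PMF.map_apply]
  calc q t = if f t = f t then q t else 0 := by simp
    _ ≤ _ := ENNReal.le_tsum (f := fun a => if f t = f a then q a else 0) t

lemma map_congr_support {Ω S : Type*} (p : PMF Ω) (X Y : Ω → S)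
    (h : ∀ ω ∈ p.support, X ω = Y ω) : p.map X = p.map Y := by
  classical
  ext s
  rw [PMF.map_apply, PMF.map_apply]
  congr 1
  funext ω
  by_cases hω : ω ∈ p.support
  · rw [h ω hω]
  · have h0 : p ω = 0 := by rwa [PMF.mem_support_iff, not_not] at hω
    simp [h0]

lemma H_eq_sum_map {Ω S T : Type*} [Fintype S] [Fintype T] (p : PMF Ω) (Y : Ω → T) (f : T → S) :
    H p (fun ω => f (Y ω))
      = ∑ t, (p.map Y t).toReal * (-Real.log (((p.map Y).map f) (f t)).toReal) := by
  have h := sum_map_mul (p.map Y) f (fun s => -Real.log (((p.map Y).map f) s).toReal)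
  rw [← h, PMF.map_comp]
  unfold H
  rw [tsum_fintype]
  refine Finset.sum_congr rfl fun s _ => ?_
  simp only [Real.negMulLog, Function.comp_def]
  ring

lemma H_le_of_isDetFnOf {Ω S T : Type*} [Fintype S] [Fintype T] (p : PMF Ω) (X : Ω → S)
    (Y : Ω → T) (h : IsDetFnOf p X Y) : H p X ≤ H p Y := by
  obtain ⟨f, hf⟩ := h
  have h1 : H p X = H p (fun ω => f (Y ω)) := by
    unfold H
    rw [map_congr_support p X (fun ω => f (Y ω)) hf]
  rw [h1, H_eq_sum_map]
  unfold H
  rw [tsum_fintype]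
  refine Finset.sum_le_sum fun t _ => ?_
  have h0 : 0 ≤ (p.map Y t).toReal := ENNReal.toReal_nonneg
  rcases h0.eq_or_lt with h0 | h0
  · rw [← h0, zero_mul, Real.negMulLog_zero]
  · have := Real.log_le_log h0 (le_map_apply (p.map Y) f t)
    rw [Real.negMulLog]
    nlinarith

lemma H_nonneg {Ω S : Type*} [Fintype S] (p : PMF Ω) (X : Ω → S) : 0 ≤ H p X := by
  unfold H
  refine tsum_nonneg fun s => Real.negMulLog_nonneg ENNReal.toReal_nonneg ?_
  exact ENNReal.toReal_le_of_le_ofReal zero_le_one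
    (ENNReal.ofReal_one.symm ▸ PMF.coe_le_one (p.map X) s)

lemma sum_fst_eq {A C : Type*} [Fintype A] [Fintype C] (q : PMF (A × C)) (z : C) :
    ∑ x, (q (x, z)).toReal = ((q.map Prod.snd) z).toReal := by
  classical
  have h := sum_map_mul q Prod.snd (fun z' => if z' = z then 1 else 0)
  simp only [mul_ite, mul_one, mul_zero, Finset.sum_ite_eq', Finset.mem_univ, if_true,
    Fintype.sum_prod_type] at h
  rw [h]

/-- The pointwise form of Gibbs' inequality, `log u ≥ 1 - 1 / u` at `u = q c / (a b)`; with the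
convention `x / 0 = 0` it also covers vanishing masses. -/
lemma mul_log_ge {q a b c : ℝ} (hq : 0 ≤ q) (ha : q ≤ a) (hb : q ≤ b) (hc : q ≤ c) :
    q - a * (b / c) ≤
      q * -Real.log a + q * -Real.log b - q * -Real.log q - q * -Real.log c := by
  rcases hq.eq_or_lt with h0 | h0
  · subst h0
    have : 0 ≤ a * (b / c) := by positivity
    simpa using this
  · have ha' := h0.trans_le ha
    have hb' := h0.trans_le hb
    have hc' := h0.trans_le hc
    have h := Real.log_le_sub_one_of_pos (show 0 < a * b / (q * c) by positivity)
    rw [Real.log_div (by positivity) (by positivity), Real.log_mul ha'.ne' hb'.ne',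
      Real.log_mul h0.ne' hc'.ne'] at h
    have h2 := mul_le_mul_of_nonneg_left h h0.le
    have h3 : q * (a * b / (q * c) - 1) = a * (b / c) - q := by
      field_simp
    rw [h3] at h2
    nlinarith

/-- Submodularity of entropy, i.e. `I(X; Y | Z) ≥ 0`. -/
lemma H_submod {Ω A B C : Type*} [Fintype A] [Fintype B] [Fintype C] (p : PMF Ω)
    (X : Ω → A) (Y : Ω → B) (Z : Ω → C) :
    H p (fun ω => (X ω, Y ω, Z ω)) + H p Z
      ≤ H p (fun ω => (X ω, Z ω)) + H p (fun ω => (Y ω, Z ω)) := by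
  set T : Ω → A × B × C := fun ω => (X ω, Y ω, Z ω)
  set q := p.map T
  set fa : A × B × C → A × C := fun t => (t.1, t.2.2)
  set fb : A × B × C → B × C := fun t => t.2
  set fc : A × B × C → C := fun t => t.2.2
  have ea : H p (fun ω => (X ω, Z ω)) = _ := H_eq_sum_map p T fa
  have eb : H p (fun ω => (Y ω, Z ω)) = _ := H_eq_sum_map p T fb
  have ec : H p Z = _ := H_eq_sum_map p T fc
  have eq : H p T = _ := H_eq_sum_map p T id
  rw [ea, eb, ec, eq, PMF.map_id]
  have hpt := Finset.sum_le_sum fun t (_ : t ∈ Finset.univ) =>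
    mul_log_ge (q := (q t).toReal) ENNReal.toReal_nonneg (le_map_apply q fa t)
      (le_map_apply q fb t) (le_map_apply q fc t)
  simp only [Finset.sum_sub_distrib, Finset.sum_add_distrib] at hpt
  have ha : ∀ z, ∑ x, ((q.map fa) (x, z)).toReal = ((q.map fc) z).toReal := by
    intro z
    rw [sum_fst_eq, PMF.map_comp]
    rfl
  -- The product measure `a b / c` has total mass at most one.
  have hle : ∑ t, ((q.map fa) (fa t)).toReal *
      (((q.map fb) (fb t)).toReal / ((q.map fc) (fc t)).toReal) ≤ 1 := by
    rw [Fintype.sum_prod_type, Finset.sum_comm]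
    simp only [fa, fb, fc]
    simp_rw [← Finset.sum_mul]
    rw [← sum_toReal (q.map fb)]
    refine Finset.sum_le_sum fun yz _ => ?_
    rw [ha]
    rcases eq_or_ne (((q.map fc) yz.2).toReal) 0 with h | h
    · rw [h, zero_mul]
      exact ENNReal.toReal_nonneg
    · exact (mul_div_cancel₀ _ h).le
  rw [sum_toReal] at hpt
  simp only [id]
  linarith

/-- Subadditivity of entropy. -/
lemma H_pair_le {Ω A B : Type*} [Fintype A] [Fintype B] (p : PMF Ω) (X : Ω → A) (Y : Ω → B) :
    H p (fun ω => (X ω, Y ω)) ≤ H p X + H p Y := by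
  have h := H_submod p X Y (fun _ => ())
  have h0 := H_nonneg p (fun _ : Ω => ())
  have h1 := H_le_of_isDetFnOf p (fun ω => (X ω, Y ω)) (fun ω => (X ω, Y ω, ()))
    ⟨fun t => (t.1, t.2.1), fun _ _ => rfl⟩
  have h2 := H_le_of_isDetFnOf p (fun ω => (X ω, ())) X ⟨fun x => (x, ()), fun _ _ => rfl⟩
  have h3 := H_le_of_isDetFnOf p (fun ω => (Y ω, ())) Y ⟨fun y => (y, ()), fun _ _ => rfl⟩
  linarith

end DiamondWiretap

/-- core entropy inequality of the converse proof of Theorem 1 (full CSI):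
`2·I(W; Y1) − I(W; Y2) ≤ H(J2) + H(Y1) + H(X1 | Z1) + H(X2 | Z2)`. -/
theorem stmt5 {Ω SW SJ1 SJ2 S1 S2 T1 T2 U1 U2 : Type*}
    [Fintype SW] [Fintype SJ1] [Fintype SJ2] [Fintype S1] [Fintype S2]
    [Fintype T1] [Fintype T2] [Fintype U1] [Fintype U2]
    (p : PMF Ω) (W : Ω → SW) (J1 : Ω → SJ1) (J2 : Ω → SJ2)
    (X1 : Ω → S1) (X2 : Ω → S2) (Y1 : Ω → T1) (Y2 : Ω → T2)
    (Z1 : Ω → U1) (Z2 : Ω → U2)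
    (hY1 : IsDetFnOf p Y1 (fun ω => (X1 ω, X2 ω)))
    (hY2 : IsDetFnOf p Y2 (fun ω => (X1 ω, X2 ω)))
    (hZ1a : IsDetFnOf p Z1 X1)
    (hZ1b : IsDetFnOf p Z1 (fun ω => (Y2 ω, X2 ω)))
    (hZ2a : IsDetFnOf p Z2 X2)
    (hZ2b : IsDetFnOf p Z2 (fun ω => (Y1 ω, X1 ω)))
    (hMarkov : condEnt p X2 (fun ω => (J1 ω, J2 ω, X1 ω)) = condEnt p X2 J2)
    (hMarkovW : condMutInfo p W Y1 (fun ω => (J1 ω, J2 ω)) = 0) :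
    2 * mutInfo p W Y1 - mutInfo p W Y2
      ≤ H p J2 + H p Y1 + condEnt p X1 Z1 + condEnt p X2 Z2 := by
  obtain ⟨f1, hf1⟩ := hY1
  obtain ⟨f2, hf2⟩ := hY2
  obtain ⟨g1, hg1⟩ := hZ1b
  obtain ⟨g2, hg2⟩ := hZ2b
  simp only [condEnt, mutInfo, condMutInfo, H2] at *
  have hdiff : H p Y1 + H p (fun ω => (W ω, Y2 ω))
      ≤ H p (fun ω => (X1 ω, X2 ω)) + H p (fun ω => (W ω, Y1 ω)) := by
    have h1 := H_submod p W (fun ω => (X1 ω, X2 ω)) Y1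
    have h2 := H_le_of_isDetFnOf p (fun ω => ((X1 ω, X2 ω), Y1 ω)) (fun ω => (X1 ω, X2 ω))
      ⟨fun x => (x, f1 x), fun ω hω => by simp only [hf1 ω hω]⟩
    have h3 := H_le_of_isDetFnOf p (fun ω => (W ω, Y2 ω))
      (fun ω => (W ω, (X1 ω, X2 ω), Y1 ω))
      ⟨fun t => (t.1, f2 t.2.1), fun ω hω => by simp only [hf2 ω hω]⟩
    linarith
  have hX12 : H p (fun ω => (X1 ω, X2 ω)) + H p Z1
      ≤ H p Y2 + H p X2 + H p (fun ω => (X1 ω, Z1 ω)) := by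
    have h1 := H_submod p X1 (fun ω => (Y2 ω, X2 ω)) Z1
    have h2 := H_le_of_isDetFnOf p (fun ω => ((Y2 ω, X2 ω), Z1 ω)) (fun ω => (Y2 ω, X2 ω))
      ⟨fun t => (t, g1 t), fun ω hω => by simp only [hg1 ω hω]⟩
    have h3 := H_le_of_isDetFnOf p (fun ω => (X1 ω, X2 ω))
      (fun ω => (X1 ω, (Y2 ω, X2 ω), Z1 ω)) ⟨fun t => (t.1, t.2.1.2), fun _ _ => rfl⟩
    have h4 := H_pair_le p Y2 X2
    linarith
  -- `I(W; Y1) ≤ H(Y1) - H(Y1 | J1, J2)`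
  have hW : H p W + H p (fun ω => (Y1 ω, J1 ω, J2 ω))
      ≤ H p (fun ω => (W ω, Y1 ω)) + H p (fun ω => (J1 ω, J2 ω)) := by
    have h1 := H_submod p (fun ω => (J1 ω, J2 ω)) Y1 W
    have h2 := H_le_of_isDetFnOf p (fun ω => (W ω, Y1 ω, J1 ω, J2 ω))
      (fun ω => ((J1 ω, J2 ω), Y1 ω, W ω))
      ⟨fun t => (t.2.2, t.2.1, t.1), fun _ _ => rfl⟩
    have h3 := H_le_of_isDetFnOf p (fun ω => ((J1 ω, J2 ω), W ω)) (fun ω => (W ω, J1 ω, J2 ω))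
      ⟨fun t => (t.2, t.1), fun _ _ => rfl⟩
    have h4 := H_le_of_isDetFnOf p (fun ω => (Y1 ω, W ω)) (fun ω => (W ω, Y1 ω))
      ⟨fun t => (t.2, t.1), fun _ _ => rfl⟩
    linarith
  have hX2 : H p X2 ≤ H p (fun ω => (X2 ω, J2 ω)) :=
    H_le_of_isDetFnOf p _ _ ⟨Prod.fst, fun _ _ => rfl⟩
  -- `H(X2 | J1, J2, X1) ≤ H(Y1 | J1, J2) + H(X2 | Z2)`
  have hcond : H p (fun ω => (X2 ω, J1 ω, J2 ω, X1 ω)) + H p (fun ω => (J1 ω, J2 ω)) + H p Z2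
      ≤ H p (fun ω => (J1 ω, J2 ω, X1 ω)) + H p (fun ω => (Y1 ω, J1 ω, J2 ω))
        + H p (fun ω => (X2 ω, Z2 ω)) := by
    have h1 := H_submod p X2 (fun ω => (Y1 ω, X1 ω, J1 ω, J2 ω)) Z2
    have h2 := H_le_of_isDetFnOf p (fun ω => ((Y1 ω, X1 ω, J1 ω, J2 ω), Z2 ω))
      (fun ω => (Y1 ω, X1 ω, J1 ω, J2 ω))
      ⟨fun t => (t, g2 (t.1, t.2.1)), fun ω hω => by simp only [hg2 ω hω]⟩
    have h3 := H_le_of_isDetFnOf p (fun ω => (X2 ω, J1 ω, J2 ω, X1 ω))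
      (fun ω => (X2 ω, (Y1 ω, X1 ω, J1 ω, J2 ω), Z2 ω))
      ⟨fun t => (t.1, t.2.1.2.2.1, t.2.1.2.2.2, t.2.1.2.1), fun _ _ => rfl⟩
    have h4 := H_submod p Y1 X1 (fun ω => (J1 ω, J2 ω))
    have h5 := H_le_of_isDetFnOf p (fun ω => (X1 ω, J1 ω, J2 ω)) (fun ω => (J1 ω, J2 ω, X1 ω))
      ⟨fun t => (t.2.2, t.1, t.2.1), fun _ _ => rfl⟩
    linarith
  linarith
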